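/- Let (𝔭_j)_{j∈ℕ} be nonnegative reals with Σ_{j=0}^∞ 𝔭_j ≤ 1 and 𝔭₀ = 0, and let a_k := μ_k(0) be the occupation probabilities of 0 for the boundary random walk started at i₀ = 0. Then for every positive integer m, Σ_{k=0}^{m−1} a_k ≤ e / √(1 − e^{−2/m}). -/

import Mathlib

/-- The substochastic transition matrix of a boundary random walk on ℕ with
jumping measure `p` at the boundary state `0`. -/
noncomputable def Ptrans (p : ℕ → ℝ) : ℕ → ℕ → ℝ
  | 0, j => p j
  | i + 1, j => if j = i ∨ j = i + 2 then 1 / 2 else 0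

/-- The (substochastic) distribution at time `k` of the boundary random walk
with jumping measure `p` started at `i₀`. -/
noncomputable def occ (p : ℕ → ℝ) (i₀ : ℕ) : ℕ → ℕ → ℝ
  | 0 => fun j => if j = i₀ then 1 else 0
  | k + 1 => fun j => ∑' i : ℕ, occ p i₀ k i * Ptrans p i j

lemma occ_succ (p : ℕ → ℝ) (k j : ℕ) :
    occ p 0 (k+1) j = occ p 0 k 0 * p j + 1/2 * occ p 0 k (j+1)
      + 1/2 * (if 2 ≤ j then occ p 0 k (j-1) else 0) := by
  change ∑' i : ℕ, occ p 0 k i * Ptrans p i j = _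
  generalize occ p 0 k = F
  rw [tsum_eq_sum (s := Finset.range (j+2))]
  · rw [Finset.sum_range_succ']
    have h0 : ∀ i, Ptrans p (i+1) j = if j = i ∨ j = i + 2 then 1 / 2 else 0 := fun i => rfl
    have h1 : Ptrans p 0 j = p j := rfl
    simp only [h0, h1]
    rw [Finset.sum_range_succ]
    by_cases hj : 2 ≤ j
    · obtain ⟨l, rfl⟩ := Nat.exists_eq_add_of_le' hj
      rw [Finset.sum_eq_single l]
      · simp
        ring
      · intro b hb hne
        have := Finset.mem_range.1 hb
        rw [if_neg (by omega), mul_zero]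
      · intro h
        simp at h
    · rw [Finset.sum_eq_zero]
      · simp [hj]
        ring
      · intro b hb
        have := Finset.mem_range.1 hb
        rw [if_neg (by omega), mul_zero]
  · intro b hb
    have hb : j + 2 ≤ b := by simpa using hb
    obtain ⟨l, rfl⟩ : ∃ l, b = l + 1 := ⟨b-1, by omega⟩
    have h0 : Ptrans p (l+1) j = if j = l ∨ j = l + 2 then 1 / 2 else 0 := rfl
    rw [h0, if_neg (by omega), mul_zero]

lemma occ_nonneg (p : ℕ → ℝ) (hp0 : ∀ j, 0 ≤ p j) (k : ℕ) : ∀ j, 0 ≤ occ p 0 k j := by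
  induction k with
  | zero => intro j; simp only [occ]; split_ifs <;> norm_num
  | succ k ih =>
    intro j
    rw [occ_succ]
    have h1 := mul_nonneg (ih 0) (hp0 j)
    have h2 := ih (j+1)
    have h3 := ih (j-1)
    split_ifs <;> linarith

lemma occ_step (p : ℕ → ℝ) (hp0 : ∀ j, 0 ≤ p j) (hpsum : Summable p)
    (hp1 : ∑' j : ℕ, p j ≤ 1) (hp00 : p 0 = 0) (s l : ℝ) (hs : 0 < s) (hl : 0 < l) (hl1 : l ≤ 1)
    (hq : s * (1 + l^2) = 2 * l) (k : ℕ) (S : ℝ) (hS : HasSum (fun j => occ p 0 k j * l^j) S) :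
    ∃ S', HasSum (fun j => occ p 0 (k+1) j * l^j) S' ∧
      s * S' ≤ S - occ p 0 k 0 * (1 - s * l) := by
  have hF := occ_nonneg p hp0 k
  have hle : ∀ j, p j * l^j ≤ p j * l := by
    intro j
    cases j with
    | zero => simp [hp00]
    | succ j =>
      refine mul_le_mul_of_nonneg_left ?_ (hp0 _)
      rw [pow_succ]
      exact mul_le_of_le_one_left hl.le (pow_le_one₀ hl.le hl1)
  have hsQ : Summable (fun j => p j * l^j) :=
    Summable.of_nonneg_of_le (fun j => mul_nonneg (hp0 j) (by positivity)) hle (hpsum.mul_right l)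
  have hQ : ∑' j, p j * l^j ≤ l := by
    calc _ ≤ ∑' j, p j * l := hsQ.tsum_le_tsum hle (hpsum.mul_right l)
      _ = (∑' j, p j) * l := tsum_mul_right
      _ ≤ l := mul_le_of_le_one_left hl.le hp1
  set Q := ∑' j, p j * l^j
  set T := S - occ p 0 k 0 with hT
  have hTs : HasSum (fun j => occ p 0 k (j+1) * l^(j+1)) T := by
    have := (hasSum_nat_add_iff' (f := fun j => occ p 0 k j * l^j) 1).2 hS
    simpa using this
  have hB : HasSum (fun j => occ p 0 k (j+1) * l^j) (T / l) := by
    have := hTs.div_const l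
    refine (congrArg (fun f => HasSum f (T / l)) ?_).mpr this
    funext j
    field_simp
    ring
  have hC : HasSum (fun j => (if 2 ≤ j then occ p 0 k (j-1) else 0) * l^j) (T * l) := by
    rw [← hasSum_nat_add_iff' 2]
    simp only [Finset.sum_range_succ]
    have := hTs.mul_right l
    simp
    refine (congrArg (fun f => HasSum f (T * l)) ?_).mpr this
    funext j
    ring
  refine ⟨occ p 0 k 0 * Q + 1/2 * (T / l) + 1/2 * (T * l), ?_, ?_⟩
  · have := ((hsQ.hasSum.mul_left (occ p 0 k 0)).add (hB.mul_left (1/2))).add (hC.mul_left (1/2))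
    refine (congrArg (fun f => HasSum f _) ?_).mpr this
    funext j
    rw [occ_succ]
    ring
  · have e : s * (1/2 * (T / l) + 1/2 * (T * l)) = T := by
      have : s * (1/2 * (T / l) + 1/2 * (T * l)) = (s * (1 + l^2)) * T / (2 * l) := by
        field_simp
      rw [this, hq]
      field_simp
    have : s * (occ p 0 k 0 * Q) ≤ s * (occ p 0 k 0 * l) :=
      mul_le_mul_of_nonneg_left (mul_le_mul_of_nonneg_left hQ (hF 0)) hs.le
    nlinarith

lemma occ_total (p : ℕ → ℝ) (hp0 : ∀ j, 0 ≤ p j) (hpsum : Summable p)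
    (hp1 : ∑' j : ℕ, p j ≤ 1) (hp00 : p 0 = 0) (s l : ℝ) (hs : 0 < s) (hl : 0 < l) (hl1 : l ≤ 1)
    (hq : s * (1 + l^2) = 2 * l) (k : ℕ) :
    ∃ S, HasSum (fun j => occ p 0 k j * l^j) S ∧
      s^k * S + (∑ i ∈ Finset.range k, s^i * occ p 0 i 0) * (1 - s * l) ≤ 1 := by
  induction k with
  | zero =>
    refine ⟨1, ?_, by simp⟩
    have := hasSum_ite_eq (0:ℕ) (1:ℝ)
    convert this using 2 with j
    by_cases h : j = 0 <;> simp [occ, h]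
  | succ k ih =>
    obtain ⟨S, hS, h⟩ := ih
    obtain ⟨S', hS', h'⟩ := occ_step p hp0 hpsum hp1 hp00 s l hs hl hl1 hq k S hS
    refine ⟨S', hS', ?_⟩
    rw [Finset.sum_range_succ]
    have := mul_le_mul_of_nonneg_left h' (pow_pos hs k).le
    rw [pow_succ]
    nlinarith

/-- If `𝔭₀ = 0`, then the expected time spent at `0` during the first `m` steps of
the boundary random walk started at `0` is at most `e / √(1 - e^{-2/m})`. -/
theorem stmt2 (p : ℕ → ℝ) (hp0 : ∀ j, 0 ≤ p j) (hpsum : Summable p)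
    (hp1 : ∑' j : ℕ, p j ≤ 1) (hp00 : p 0 = 0)
    (m : ℕ) (hm : 0 < m) :
    ∑ k ∈ Finset.range m, occ p 0 k 0 ≤
      Real.exp 1 / Real.sqrt (1 - Real.exp (-2 / (m : ℝ))) := by
  have hm' : (0:ℝ) < m := by exact_mod_cast hm
  set s := Real.exp (-1 / (m:ℝ)) with hsdef
  have hs : 0 < s := Real.exp_pos _
  have hs1 : s < 1 := by
    rw [hsdef, Real.exp_lt_one_iff]
    exact div_neg_of_neg_of_pos (by norm_num) hm'
  have hs2 : Real.exp (-2 / (m : ℝ)) = s^2 := by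
    rw [hsdef, ← Real.exp_nat_mul]
    congr 1
    push_cast
    ring
  rw [hs2]
  have hpos : 0 < 1 - s^2 := by nlinarith
  set r := Real.sqrt (1 - s^2) with hr
  have hr0 : 0 < r := Real.sqrt_pos.2 hpos
  have hr2 : r^2 = 1 - s^2 := Real.sq_sqrt hpos.le
  have hr1 : r < 1 := by nlinarith
  have hrs : 1 - r ≤ s := by nlinarith
  have hsl : s * ((1 - r)/s) = 1 - r := by field_simp
  obtain ⟨S, hS, h⟩ := occ_total p hp0 hpsum hp1 hp00 s ((1 - r)/s) hs
    (div_pos (by linarith) hs) ((div_le_one hs).2 hrs)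
    (by field_simp; nlinarith) m
  have hS0 : 0 ≤ S := hS.nonneg fun j => mul_nonneg (occ_nonneg p hp0 m j)
    (pow_nonneg (div_pos (by linarith) hs).le j)
  rw [hsl] at h
  have h2 : (∑ i ∈ Finset.range m, s^i * occ p 0 i 0) * r ≤ 1 := by
    have := mul_nonneg (pow_pos hs m).le hS0
    linarith
  rw [le_div_iff₀ hr0]
  have h3 : ∑ k ∈ Finset.range m, occ p 0 k 0 ≤
      Real.exp 1 * ∑ i ∈ Finset.range m, s^i * occ p 0 i 0 := by
    rw [Finset.mul_sum]
    refine Finset.sum_le_sum fun i hi => ?_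
    rw [← mul_assoc]
    refine le_mul_of_one_le_left (occ_nonneg p hp0 i 0) ?_
    rw [hsdef, ← Real.exp_nat_mul, ← Real.exp_add, Real.one_le_exp_iff]
    have : (i:ℝ) ≤ m := by exact_mod_cast (Finset.mem_range.1 hi).le
    have h4 : (i:ℝ) / m ≤ 1 := (div_le_one hm').2 this
    have h5 : (i:ℝ) * (-1 / m) = - (i / m) := by ring
    linarith
  calc _ ≤ (Real.exp 1 * ∑ i ∈ Finset.range m, s^i * occ p 0 i 0) * r :=
        mul_le_mul_of_nonneg_right h3 hr0.le
    _ = Real.exp 1 * ((∑ i ∈ Finset.range m, s^i * occ p 0 i 0) * r) := by ring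
    _ ≤ _ := mul_le_of_le_one_right (Real.exp_pos 1).le h2
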